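/- Size of λS coercions is bounded by an exponential of their height: for every top-level λS coercion c, size(c) + 5 ≤ 9·2^height(c); for every intermediate coercion i, size(i) + 7 ≤ 9·2^height(i); and for every ground coercion g, size(g) + 9 ≤ 9·2^height(g). -/

import Mathlib

/-!
The three bounds are proved together by structural induction on coercions. A projection or an
injection adds 2 to the size and leaves the height unchanged, which is what the gaps between the
constants 5, 7 and 9 absorb. A structural coercion raises the height by one, so its bound doubles,
and `node_bound` shows that this covers the sum of the sizes of its two components.
-/

set_option maxHeartbeats 1000000

abbrev Label : Type := ℕ

inductive BaseTy : Type
  | nat | bool | int | unit | bot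
deriving DecidableEq

inductive GType : Type
  | base (b : BaseTy)
  | unk
  | arr (A B : GType)
  | prod (A B : GType)
  | sum (A B : GType)
deriving DecidableEq

inductive Atomic : GType → Prop
  | base (b : BaseTy) : Atomic (.base b)
  | unk : Atomic .unk

inductive TyPrec : GType → GType → Prop
  | unk (A : GType) : TyPrec .unk A
  | base (b : BaseTy) : TyPrec (.base b) (.base b)
  | arr : TyPrec A A' → TyPrec B B' → TyPrec (.arr A B) (.arr A' B')
  | prod : TyPrec A A' → TyPrec B B' → TyPrec (.prod A B) (.prod A' B')
  | sum : TyPrec A A' → TyPrec B B' → TyPrec (.sum A B) (.sum A' B')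

inductive CtxPrec : List GType → List GType → Prop
  | nil : CtxPrec [] []
  | cons : TyPrec A A' → CtxPrec Γ Γ' → CtxPrec (A :: Γ) (A' :: Γ')

inductive Consis : GType → GType → Type
  | unkR (A : GType) : Consis A .unk
  | unkL (B : GType) : Consis .unk B
  | base (b : BaseTy) : Consis (.base b) (.base b)
  | arr : Consis A' A → Consis B B' → Consis (.arr A B) (.arr A' B')
  | prod : Consis A A' → Consis B B' → Consis (.prod A B) (.prod A' B')
  | sum : Consis A A' → Consis B B' → Consis (.sum A B) (.sum A' B')

def Consis.join : ∀ {A B : GType}, Consis A B → GType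
  | _, _, .unkR A => A
  | _, _, .unkL B => B
  | _, _, .base b => .base b
  | _, _, .arr c d => .arr c.join d.join
  | _, _, .prod c d => .prod c.join d.join
  | _, _, .sum c d => .sum c.join d.join

def Consis.refl : (A : GType) → Consis A A
  | .unk => .unkR .unk
  | .base b => .base b
  | .arr A B => .arr (Consis.refl A) (Consis.refl B)
  | .prod A B => .prod (Consis.refl A) (Consis.refl B)
  | .sum A B => .sum (Consis.refl A) (Consis.refl B)

def Consis.symm : ∀ {A B : GType}, Consis A B → Consis B A
  | _, _, .unkR A => .unkL A
  | _, _, .unkL B => .unkR B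
  | _, _, .base b => .base b
  | _, _, .arr c d => .arr c.symm d.symm
  | _, _, .prod c d => .prod c.symm d.symm
  | _, _, .sum c d => .sum c.symm d.symm

mutual
def Consis.joinL : ∀ {A B : GType}, (c : Consis A B) → Consis A c.join
  | _, _, .unkR A => Consis.refl A
  | _, _, .unkL B => .unkL B
  | _, _, .base b => .base b
  | _, _, .arr c d => .arr (Consis.joinR c).symm (Consis.joinL d)
  | _, _, .prod c d => .prod (Consis.joinL c) (Consis.joinL d)
  | _, _, .sum c d => .sum (Consis.joinL c) (Consis.joinL d)

def Consis.joinR : ∀ {A B : GType}, (c : Consis A B) → Consis B c.join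
  | _, _, .unkR A => .unkL A
  | _, _, .unkL B => Consis.refl B
  | _, _, .base b => .base b
  | _, _, .arr c d => .arr (Consis.joinL c).symm (Consis.joinR d)
  | _, _, .prod c d => .prod (Consis.joinR c) (Consis.joinR d)
  | _, _, .sum c d => .sum (Consis.joinR c) (Consis.joinR d)
end

inductive GVar : List GType → GType → Type
  | z : GVar (A :: Γ) A
  | s : GVar Γ A → GVar (B :: Γ) A

def GVar.idx : ∀ {Γ A}, GVar Γ A → ℕ
  | _, _, .z => 0
  | _, _, .s x => x.idx + 1

inductive Prim : GType → Type
  | base (b : BaseTy) : Prim (.base b)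
  | fn (b : BaseTy) {A : GType} : Prim A → Prim (.arr (.base b) A)

def BaseTy.rep : BaseTy → Type
  | .nat => ℕ
  | .bool => Bool
  | .int => ℤ
  | .unit => Unit
  | .bot => Empty

def Prim.rep : ∀ {A : GType}, Prim A → Type
  | _, .base b => b.rep
  | _, .fn b p => b.rep → p.rep

/-- Ground types. -/
inductive Ground : GType → Prop
  | base (b : BaseTy) : Ground (.base b)
  | arr : Ground (.arr .unk .unk)
  | prod : Ground (.prod .unk .unk)
  | sum : Ground (.sum .unk .unk)

mutual
/-- λS top-level coercions. -/
inductive SCo : GType → GType → Type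
  | id : SCo .unk .unk
  | proj (H : GType) (g : Ground H) (ℓ : Label) {B : GType} (i : ICo H B) : SCo .unk B
  | mid {A B : GType} (i : ICo A B) : SCo A B

/-- λS intermediate coercions. -/
inductive ICo : GType → GType → Type
  | inj {A G : GType} (g : GCo A G) (gr : Ground G) : ICo A .unk
  | gnd {A B : GType} (g : GCo A B) : ICo A B
  | fail (A B : GType) (ℓ : Label) : ICo A B

/-- λS ground coercions. -/
inductive GCo : GType → GType → Type
  | id (b : BaseTy) : GCo (.base b) (.base b)
  | arr {A B C D : GType} (c : SCo C A) (d : SCo B D) : GCo (.arr A B) (.arr C D)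
  | prod {A B C D : GType} (c : SCo A C) (d : SCo B D) : GCo (.prod A B) (.prod C D)
  | sum {A B C D : GType} (c : SCo A C) (d : SCo B D) : GCo (.sum A B) (.sum C D)
end

mutual
/-- Height of a λS top-level coercion. -/
def heightS : ∀ {A B : GType}, SCo A B → ℕ
  | _, _, .id => 0
  | _, _, .proj _ _ _ i => heightI i
  | _, _, .mid i => heightI i
/-- Height of a λS intermediate coercion. -/
def heightI : ∀ {A B : GType}, ICo A B → ℕ
  | _, _, .inj g _ => heightG g
  | _, _, .gnd g => heightG g
  | _, _, .fail _ _ _ => 0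
/-- Height of a λS ground coercion. -/
def heightG : ∀ {A B : GType}, GCo A B → ℕ
  | _, _, .id _ => 0
  | _, _, .arr c d => 1 + max (heightS c) (heightS d)
  | _, _, .prod c d => 1 + max (heightS c) (heightS d)
  | _, _, .sum c d => 1 + max (heightS c) (heightS d)
end

mutual
/-- Size of a λS top-level coercion. -/
def sizeS : ∀ {A B : GType}, SCo A B → ℕ
  | _, _, .id => 0
  | _, _, .proj _ _ _ i => 2 + sizeI i
  | _, _, .mid i => sizeI i
/-- Size of a λS intermediate coercion. -/
def sizeI : ∀ {A B : GType}, ICo A B → ℕ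
  | _, _, .inj g _ => 2 + sizeG g
  | _, _, .gnd g => sizeG g
  | _, _, .fail _ _ _ => 0
/-- Size of a λS ground coercion. -/
def sizeG : ∀ {A B : GType}, GCo A B → ℕ
  | _, _, .id _ => 0
  | _, _, .arr c d => 1 + sizeS c + sizeS d
  | _, _, .prod c d => 1 + sizeS c + sizeS d
  | _, _, .sum c d => 1 + sizeS c + sizeS d
end

/-- The step shared by arrow, pair and sum coercions. The additive constants balance exactly:
`(1 + m + n) + 9 = (m + 5) + (n + 5)`, and the doubling of the bound pays for the two components. -/
theorem node_bound {m n a b : ℕ} (hm : m + 5 ≤ 9 * 2 ^ a) (hn : n + 5 ≤ 9 * 2 ^ b) :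
    1 + m + n + 9 ≤ 9 * 2 ^ (1 + max a b) := by
  have ha : 2 ^ a ≤ 2 ^ max a b := Nat.pow_le_pow_right (by norm_num) (le_max_left a b)
  have hb : 2 ^ b ≤ 2 ^ max a b := Nat.pow_le_pow_right (by norm_num) (le_max_right a b)
  rw [pow_add, pow_one]
  omega

mutual
theorem sizeS_bound : ∀ {A B : GType} (c : SCo A B), sizeS c + 5 ≤ 9 * 2 ^ heightS c
  | _, _, .id => by simp [sizeS, heightS]
  | _, _, .proj _ _ _ i => by
      have := sizeI_bound i
      simp only [sizeS, heightS]
      omega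
  | _, _, .mid i => by
      have := sizeI_bound i
      simp only [sizeS, heightS]
      omega

theorem sizeI_bound : ∀ {A B : GType} (i : ICo A B), sizeI i + 7 ≤ 9 * 2 ^ heightI i
  | _, _, .inj g _ => by
      have := sizeG_bound g
      simp only [sizeI, heightI]
      omega
  | _, _, .gnd g => by
      have := sizeG_bound g
      simp only [sizeI, heightI]
      omega
  | _, _, .fail _ _ _ => by simp [sizeI, heightI]

theorem sizeG_bound : ∀ {A B : GType} (g : GCo A B), sizeG g + 9 ≤ 9 * 2 ^ heightG g
  | _, _, .id _ => by simp [sizeG, heightG]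
  | _, _, .arr c d => by
      simpa only [sizeG, heightG] using node_bound (sizeS_bound c) (sizeS_bound d)
  | _, _, .prod c d => by
      simpa only [sizeG, heightG] using node_bound (sizeS_bound c) (sizeS_bound d)
  | _, _, .sum c d => by
      simpa only [sizeG, heightG] using node_bound (sizeS_bound c) (sizeS_bound d)
end

/-- Lemma 7.8 for λS: the size of a coercion is bounded by an exponential of
its height. -/
theorem size_bounded_by_height :
    (∀ {A B : GType} (c : SCo A B), sizeS c + 5 ≤ 9 * 2 ^ heightS c)
  ∧ (∀ {A B : GType} (i : ICo A B), sizeI i + 7 ≤ 9 * 2 ^ heightI i)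
  ∧ (∀ {A B : GType} (g : GCo A B), sizeG g + 9 ≤ 9 * 2 ^ heightG g) := by
  exact ⟨sizeS_bound, sizeI_bound, sizeG_bound⟩
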